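/- Let γ > 0 and let Z ∈ ℝ^{n1×n2} have singular value decomposition Z = Σ_{i=1}^{k} σ_i·u_i·v_iᵀ, where σ_i ≥ 0, the vectors u_1,…,u_k ∈ ℝ^{n1} are orthonormal, and v_1,…,v_k ∈ ℝ^{n2} are orthonormal. Then the matrix Σ_{i=1}^{k} max(σ_i − γ, 0)·u_i·v_iᵀ is a minimizer of the function X ↦ γ‖X‖_* + (1/2)‖X − Z‖_F² over ℝ^{n1×n2} (singular value soft-thresholding is the proximal operator of γ‖·‖_*). -/

import Mathlib

open Matrix
open scoped BigOperators

/-- Frobenius norm of a real matrix. -/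
noncomputable def frob {n1 n2 : ℕ} (A : Matrix (Fin n1) (Fin n2) ℝ) : ℝ :=
  Real.sqrt (∑ i, ∑ j, A i j ^ 2)

/-- Entrywise ℓ¹ norm. -/
noncomputable def l1norm {n1 n2 : ℕ} (A : Matrix (Fin n1) (Fin n2) ℝ) : ℝ :=
  ∑ i, ∑ j, |A i j|

/-- Trace inner product ⟨A,B⟩ = trace(AᵀB). -/
noncomputable def minner {n1 n2 : ℕ} (A B : Matrix (Fin n1) (Fin n2) ℝ) : ℝ :=
  ∑ i, ∑ j, A i j * B i j

/-- Spectral norm (largest singular value), as the ℓ²→ℓ² operator norm. -/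
noncomputable def spec {n1 n2 : ℕ} (A : Matrix (Fin n1) (Fin n2) ℝ) : ℝ :=
  sSup {c : ℝ | ∃ x : Fin n2 → ℝ, (∑ j, x j ^ 2) ≤ 1 ∧
    c = Real.sqrt (∑ i, (∑ j, A i j * x j) ^ 2)}

/-- Nuclear norm (sum of singular values), via duality with the spectral norm. -/
noncomputable def nuc {n1 n2 : ℕ} (A : Matrix (Fin n1) (Fin n2) ℝ) : ℝ :=
  sSup {c : ℝ | ∃ B : Matrix (Fin n1) (Fin n2) ℝ, spec B ≤ 1 ∧ c = minner A B}

/-- P_Ω: the matrix agreeing with `M` on `Ω` and zero off `Ω`. -/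
noncomputable def projS {n1 n2 : ℕ} (Ω : Finset (Fin n1 × Fin n2))
    (M : Matrix (Fin n1) (Fin n2) ℝ) : Matrix (Fin n1) (Fin n2) ℝ :=
  Matrix.of fun i j => if (i, j) ∈ Ω then M i j else 0

/-- Entrywise sign matrix. -/
noncomputable def signM {n1 n2 : ℕ} (A : Matrix (Fin n1) (Fin n2) ℝ) :
    Matrix (Fin n1) (Fin n2) ℝ :=
  Matrix.of fun i j => Real.sign (A i j)

/-- The tangent space T = {UQᵀ + RVᵀ}. -/
def memT {n1 n2 r : ℕ} (U : Matrix (Fin n1) (Fin r) ℝ) (V : Matrix (Fin n2) (Fin r) ℝ)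
    (M : Matrix (Fin n1) (Fin n2) ℝ) : Prop :=
  ∃ (Q : Matrix (Fin n2) (Fin r) ℝ) (R : Matrix (Fin n1) (Fin r) ℝ), M = U * Qᵀ + R * Vᵀ

/-- Membership in T⊥, the orthogonal complement of the tangent space. -/
def memTperp {n1 n2 r : ℕ} (U : Matrix (Fin n1) (Fin r) ℝ) (V : Matrix (Fin n2) (Fin r) ℝ)
    (W : Matrix (Fin n1) (Fin n2) ℝ) : Prop :=
  ∀ M, memT U V M → minner W M = 0

/-- (L̂, Ŝ) is a global minimizer of the √PCP objective
`‖L‖_* + λ‖S‖₁ + μ‖L + S − D‖_F`. -/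
def IsRootPCPMin {n1 n2 : ℕ} (D : Matrix (Fin n1) (Fin n2) ℝ) (lam mu : ℝ)
    (Lh Sh : Matrix (Fin n1) (Fin n2) ℝ) : Prop :=
  ∀ L S : Matrix (Fin n1) (Fin n2) ℝ,
    nuc Lh + lam * l1norm Sh + mu * frob (Lh + Sh - D) ≤
      nuc L + lam * l1norm S + mu * frob (L + S - D)

/-- (L̂, Ŝ) is a minimizer of StablePCP_c(δ):
minimize `‖L‖_* + λ‖S‖₁` subject to `‖L + S − D‖_F ≤ δ`. -/
def IsStablePCPMin {n1 n2 : ℕ} (D : Matrix (Fin n1) (Fin n2) ℝ) (lam δ : ℝ)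
    (Lh Sh : Matrix (Fin n1) (Fin n2) ℝ) : Prop :=
  frob (Lh + Sh - D) ≤ δ ∧
    ∀ L S : Matrix (Fin n1) (Fin n2) ℝ, frob (L + S - D) ≤ δ →
      nuc Lh + lam * l1norm Sh ≤ nuc L + lam * l1norm S

/-- Frobenius distance between pairs: ‖(L,S) − (L',S')‖_F. -/
noncomputable def pairDist {n1 n2 : ℕ} (L S L' S' : Matrix (Fin n1) (Fin n2) ℝ) : ℝ :=
  Real.sqrt (frob (L - L') ^ 2 + frob (S - S') ^ 2)

/-- Sample space of the random sparsity model: a uniformly random support of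
cardinality m together with iid uniform random signs. -/
abbrev SampleSpace (n1 n2 m : ℕ) : Type :=
  {Ω : Finset (Fin n1 × Fin n2) // Ω.card = m} × ((Fin n1 × Fin n2) → Bool)

/-- The sparse matrix S0 built from fixed magnitudes `a` and a random sample:
S0 vanishes off Ω and equals ±a on Ω according to the random signs. -/
noncomputable def sparseOf {n1 n2 m : ℕ} (a : Fin n1 × Fin n2 → ℝ) (ω : SampleSpace n1 n2 m) :
    Matrix (Fin n1) (Fin n2) ℝ :=
  Matrix.of fun i j =>
    if (i, j) ∈ ω.1.1 then (if ω.2 (i, j) then a (i, j) else -a (i, j)) else 0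

open Classical in
/-- Uniform probability of an event on a finite sample space. -/
noncomputable def unifProb {α : Type*} [Fintype α] (E : α → Prop) : ℝ :=
  ((Finset.univ.filter fun a => E a).card : ℝ) / (Fintype.card α : ℝ)

/-!
The matrix `Z - X*` has singular values `min σᵢ γ`, so `B = γ⁻¹ (Z - X*)` has spectral norm at most
`1`. Its singular values equal `1` wherever those of `X*` are nonzero, hence `⟨X*, B⟩ = ‖X*‖_*`, and
by duality `⟨X, B⟩ ≤ ‖X‖_*` for every `X`: `B` is a subgradient of `‖·‖_*` at `X*`. Expanding
`‖X - Z‖_F²` around `X*` then gives minimality, even with the quadratic gain `½‖X - X*‖_F²`.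
-/

section L2OpNorm

open scoped Matrix.Norms.L2Operator

variable {𝕜 l m n o : Type*} [RCLike 𝕜] [Fintype l] [Fintype m] [Fintype n] [DecidableEq n]

theorem norm_apply_le_l2_opNorm (A : Matrix m n 𝕜) (i : m) (j : n) : ‖A i j‖ ≤ ‖A‖ :=
  calc ‖A i j‖ = ‖WithLp.toLp 2 (A *ᵥ Pi.single j 1) i‖ := by simp
    _ ≤ ‖WithLp.toLp 2 (A *ᵥ Pi.single j 1)‖ := PiLp.norm_apply_le _ i
    _ ≤ ‖A‖ * ‖EuclideanSpace.single j (1 : 𝕜)‖ := l2_opNorm_mulVec A (EuclideanSpace.single j 1)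
    _ = ‖A‖ := by simp

theorem l2_opNorm_le_one_of_mul_conjTranspose_eq_one [DecidableEq m] {U : Matrix m n 𝕜}
    (hU : U * Uᴴ = 1) : ‖U‖ ≤ 1 := by
  have norm_one_le : ‖(1 : Matrix m m 𝕜)‖ ≤ 1 := by
    rw [← diagonal_one, l2_opNorm_diagonal]
    exact (pi_norm_le_iff_of_nonneg zero_le_one).2 fun _ => by simp
  have norm_sq : ‖U‖ ^ 2 = ‖(1 : Matrix m m 𝕜)‖ := by
    rw [sq, ← hU, ← l2_opNorm_conjTranspose U, ← l2_opNorm_conjTranspose_mul_self,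
      conjTranspose_conjTranspose]
  exact (sq_le_one_iff₀ (norm_nonneg U)).1 (norm_sq.trans_le norm_one_le)

theorem l2_opNorm_mul_mul_le [DecidableEq m] [Fintype o] [DecidableEq o]
    {A : Matrix l m 𝕜} {C : Matrix n o 𝕜} (hA : ‖A‖ ≤ 1) (hC : ‖C‖ ≤ 1) (B : Matrix m n 𝕜) :
    ‖A * B * C‖ ≤ ‖B‖ :=
  calc ‖A * B * C‖ ≤ ‖A * B‖ * ‖C‖ := l2_opNorm_mul _ _
    _ ≤ ‖A * B‖ := mul_le_of_le_one_right (norm_nonneg _) hC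
    _ ≤ ‖A‖ * ‖B‖ := l2_opNorm_mul _ _
    _ ≤ ‖B‖ := mul_le_of_le_one_left (norm_nonneg _) hA

theorem l2_opNorm_transpose [DecidableEq m] (A : Matrix m n ℝ) : ‖Aᵀ‖ = ‖A‖ := by
  rw [← conjTranspose_eq_transpose_of_trivial, l2_opNorm_conjTranspose]

theorem l2_opNorm_le_one_of_mul_transpose_eq_one [DecidableEq m] {U : Matrix m n ℝ}
    (hU : U * Uᵀ = 1) : ‖U‖ ≤ 1 := by
  rw [← conjTranspose_eq_transpose_of_trivial] at hU
  exact l2_opNorm_le_one_of_mul_conjTranspose_eq_one hU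

theorem spec_eq_l2_opNorm {n1 n2 : ℕ} (A : Matrix (Fin n1) (Fin n2) ℝ) : spec A = ‖A‖ := by
  rw [l2_opNorm_def, ← ContinuousLinearMap.sSup_unitClosedBall_eq_norm, spec]
  congr 1
  ext c
  constructor
  · rintro ⟨x, hx, rfl⟩
    refine ⟨WithLp.toLp 2 x, ?_, ?_⟩
    · simpa [EuclideanSpace.norm_eq] using hx
    · simp [EuclideanSpace.norm_eq, mulVec, dotProduct]
  · rintro ⟨x, hx, rfl⟩
    refine ⟨x.ofLp, ?_, ?_⟩
    · simpa [EuclideanSpace.norm_eq] using hx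
    · simp [EuclideanSpace.norm_eq, mulVec, dotProduct, toLpLin_apply]

end L2OpNorm

section TraceInner

variable {n1 n2 : ℕ}

theorem minner_eq_trace (A B : Matrix (Fin n1) (Fin n2) ℝ) : minner A B = trace (Aᵀ * B) := by
  simp only [minner, trace, diag_apply, mul_apply, transpose_apply]
  exact Finset.sum_comm

theorem frob_sq (A : Matrix (Fin n1) (Fin n2) ℝ) : frob A ^ 2 = minner A A := by
  rw [frob, Real.sq_sqrt (by positivity)]
  simp only [minner, sq]

theorem frob_add_sq (A B : Matrix (Fin n1) (Fin n2) ℝ) :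
    frob (A + B) ^ 2 = frob A ^ 2 + 2 * minner A B + frob B ^ 2 := by
  have trace_comm : trace (Bᵀ * A) = trace (Aᵀ * B) := by
    rw [← trace_transpose, transpose_mul, transpose_transpose]
  simp only [frob_sq, minner_eq_trace, transpose_add, Matrix.add_mul, Matrix.mul_add, trace_add,
    trace_comm]
  ring

end TraceInner

section NuclearNorm

open scoped Matrix.Norms.L2Operator

variable {n1 n2 : ℕ} {ι : Type*} [Fintype ι] [DecidableEq ι]
  {U : Matrix ι (Fin n1) ℝ} {V : Matrix ι (Fin n2) ℝ}

theorem minner_le_nuc {B : Matrix (Fin n1) (Fin n2) ℝ} (hB : spec B ≤ 1)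
    (A : Matrix (Fin n1) (Fin n2) ℝ) : minner A B ≤ nuc A := by
  refine le_csSup ⟨l1norm A, ?_⟩ ⟨B, hB, rfl⟩
  rintro _ ⟨C, hC, rfl⟩
  refine Finset.sum_le_sum fun i _ => Finset.sum_le_sum fun j _ => ?_
  have entry_le : |C i j| ≤ 1 :=
    (norm_apply_le_l2_opNorm C i j).trans ((spec_eq_l2_opNorm C).symm.trans_le hC)
  calc A i j * C i j ≤ |A i j| * |C i j| := (le_abs_self _).trans_eq (abs_mul _ _)
    _ ≤ |A i j| := mul_le_of_le_one_right (abs_nonneg _) entry_le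

theorem minner_transpose_mul_diagonal_mul (U : Matrix ι (Fin n1) ℝ) (V : Matrix ι (Fin n2) ℝ)
    (s : ι → ℝ) (B : Matrix (Fin n1) (Fin n2) ℝ) :
    minner (Uᵀ * diagonal s * V) B = ∑ i, s i * (U * B * Vᵀ) i i :=
  calc minner (Uᵀ * diagonal s * V) B = trace (Vᵀ * (diagonal s * U * B)) := by
        simp only [minner_eq_trace, transpose_mul, diagonal_transpose, transpose_transpose,
          Matrix.mul_assoc]
    _ = trace (diagonal s * (U * B * Vᵀ)) := by
        rw [trace_mul_comm]
        simp only [Matrix.mul_assoc]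
    _ = ∑ i, s i * (U * B * Vᵀ) i i := by
        simp only [trace, diag_apply, diagonal_mul]

theorem minner_transpose_mul_diagonal_mul_self (hU : U * Uᵀ = 1) (hV : V * Vᵀ = 1) (s b : ι → ℝ) :
    minner (Uᵀ * diagonal s * V) (Uᵀ * diagonal b * V) = ∑ i, s i * b i := by
  have cancel : U * (Uᵀ * diagonal b * V) * Vᵀ = diagonal b :=
    calc U * (Uᵀ * diagonal b * V) * Vᵀ = U * Uᵀ * diagonal b * (V * Vᵀ) := by
          simp only [Matrix.mul_assoc]
      _ = diagonal b := by rw [hU, hV, Matrix.one_mul, Matrix.mul_one]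
  simp only [minner_transpose_mul_diagonal_mul, cancel, diagonal_apply_eq]

theorem spec_transpose_mul_diagonal_mul_le_one (hU : U * Uᵀ = 1) (hV : V * Vᵀ = 1)
    {b : ι → ℝ} (hb : ∀ i, |b i| ≤ 1) : spec (Uᵀ * diagonal b * V) ≤ 1 := by
  have hU' : ‖Uᵀ‖ ≤ 1 :=
    (l2_opNorm_transpose U).trans_le (l2_opNorm_le_one_of_mul_transpose_eq_one hU)
  have hV' : ‖V‖ ≤ 1 := l2_opNorm_le_one_of_mul_transpose_eq_one hV
  calc spec (Uᵀ * diagonal b * V) = ‖Uᵀ * diagonal b * V‖ := spec_eq_l2_opNorm _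
    _ ≤ ‖diagonal b‖ := l2_opNorm_mul_mul_le hU' hV' _
    _ = ‖b‖ := l2_opNorm_diagonal b
    _ ≤ 1 := (pi_norm_le_iff_of_nonneg zero_le_one).2 hb

theorem nuc_transpose_mul_diagonal_mul (hU : U * Uᵀ = 1) (hV : V * Vᵀ = 1)
    {s : ι → ℝ} (hs : ∀ i, 0 ≤ s i) : nuc (Uᵀ * diagonal s * V) = ∑ i, s i := by
  apply le_antisymm
  · refine Real.sSup_le ?_ (Finset.sum_nonneg fun i _ => hs i)
    rintro _ ⟨B, hB, rfl⟩
    have hU' : ‖U‖ ≤ 1 := l2_opNorm_le_one_of_mul_transpose_eq_one hU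
    have hV' : ‖Vᵀ‖ ≤ 1 :=
      (l2_opNorm_transpose V).trans_le (l2_opNorm_le_one_of_mul_transpose_eq_one hV)
    have entry_le (i : ι) : (U * B * Vᵀ) i i ≤ 1 :=
      calc (U * B * Vᵀ) i i ≤ ‖(U * B * Vᵀ) i i‖ := Real.le_norm_self _
        _ ≤ ‖U * B * Vᵀ‖ := norm_apply_le_l2_opNorm _ i i
        _ ≤ ‖B‖ := l2_opNorm_mul_mul_le hU' hV' B
        _ = spec B := (spec_eq_l2_opNorm B).symm
        _ ≤ 1 := hB
    rw [minner_transpose_mul_diagonal_mul]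
    exact Finset.sum_le_sum fun i _ => mul_le_of_le_one_right (hs i) (entry_le i)
  · calc ∑ i, s i = minner (Uᵀ * diagonal s * V) (Uᵀ * diagonal (fun _ => 1) * V) := by
          simp only [minner_transpose_mul_diagonal_mul_self hU hV, mul_one]
      _ ≤ nuc (Uᵀ * diagonal s * V) :=
          minner_le_nuc (spec_transpose_mul_diagonal_mul_le_one hU hV fun _ => by simp) _

theorem prox_nuc_growth_of_minner_eq_nuc {γ : ℝ} (hγ : 0 ≤ γ) {Y B : Matrix (Fin n1) (Fin n2) ℝ}
    (hB : spec B ≤ 1) (hY : minner Y B = nuc Y) (X : Matrix (Fin n1) (Fin n2) ℝ) :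
    γ * nuc Y + (1 / 2) * frob (Y - (Y + γ • B)) ^ 2 + (1 / 2) * frob (X - Y) ^ 2 ≤
      γ * nuc X + (1 / 2) * frob (X - (Y + γ • B)) ^ 2 := by
  have expand : frob (X - (Y + γ • B)) ^ 2 = frob (X - Y) ^ 2
      - 2 * γ * (minner X B - minner Y B) + frob (Y - (Y + γ • B)) ^ 2 := by
    rw [← sub_add_sub_cancel X Y (Y + γ • B), frob_add_sq, sub_add_cancel_left]
    simp only [minner_eq_trace, transpose_sub, Matrix.sub_mul, Matrix.mul_neg, Matrix.mul_smul,
      trace_sub, trace_neg, trace_smul, smul_eq_mul]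
    ring
  have subgradient : γ * (minner X B - minner Y B) ≤ γ * (nuc X - nuc Y) := by
    gcongr
    · exact minner_le_nuc hB X
    · exact hY.ge
  linarith

theorem prox_nuc_growth_transpose_mul_diagonal_mul {γ : ℝ} (hγ : 0 ≤ γ)
    (hU : U * Uᵀ = 1) (hV : V * Vᵀ = 1) {s b : ι → ℝ} (hs : ∀ i, 0 ≤ s i) (hb : ∀ i, |b i| ≤ 1)
    (hsb : ∀ i, s i * b i = s i) (X : Matrix (Fin n1) (Fin n2) ℝ) :
    γ * nuc (Uᵀ * diagonal s * V)
        + (1 / 2) * frob (Uᵀ * diagonal s * V - Uᵀ * diagonal (s + γ • b) * V) ^ 2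
        + (1 / 2) * frob (X - Uᵀ * diagonal s * V) ^ 2 ≤
      γ * nuc X + (1 / 2) * frob (X - Uᵀ * diagonal (s + γ • b) * V) ^ 2 := by
  have target_eq : Uᵀ * diagonal (s + γ • b) * V =
      Uᵀ * diagonal s * V + γ • (Uᵀ * diagonal b * V) := by
    have diagonal_eq : diagonal (s + γ • b) = diagonal s + γ • diagonal b := by
      rw [← diagonal_smul, diagonal_add]
      rfl
    rw [diagonal_eq, Matrix.mul_add, Matrix.add_mul, Matrix.mul_smul, Matrix.smul_mul]
  have norming : minner (Uᵀ * diagonal s * V) (Uᵀ * diagonal b * V) =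
      nuc (Uᵀ * diagonal s * V) := by
    simp only [minner_transpose_mul_diagonal_mul_self hU hV,
      nuc_transpose_mul_diagonal_mul hU hV hs, hsb]
  rw [target_eq]
  exact prox_nuc_growth_of_minner_eq_nuc hγ
    (spec_transpose_mul_diagonal_mul_le_one hU hV hb) norming X

end NuclearNorm

section SingularValueSums

variable {R m n ι : Type*} [DecidableEq ι]

theorem of_mul_transpose_of_eq_one [NonAssocSemiring R] [Fintype n] {v : ι → n → R}
    (hv : ∀ i j, ∑ q, v i q * v j q = if i = j then 1 else 0) : of v * (of v)ᵀ = 1 := by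
  ext i j
  simp only [mul_apply, transpose_apply, of_apply, hv, one_apply]

theorem of_sum_mul_mul_eq [CommSemiring R] [Fintype ι]
    (s : ι → R) (u : ι → m → R) (v : ι → n → R) :
    (of fun p q => ∑ i, s i * (u i p * v i q)) = (of u)ᵀ * diagonal s * of v := by
  ext p q
  rw [mul_apply]
  simp only [of_apply, mul_diagonal, transpose_apply]
  exact Finset.sum_congr rfl fun i _ => by ring

end SingularValueSums

section SoftThreshold

variable {R : Type*} [Field R] [LinearOrder R] [IsStrictOrderedRing R] {γ : R}

theorem max_sub_zero_add_mul_min_div_one (hγ : 0 < γ) (σ : R) :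
    max (σ - γ) 0 + γ * min (σ / γ) 1 = σ := by
  rw [mul_min_of_nonneg _ _ hγ.le, mul_div_cancel₀ _ hγ.ne', mul_one, ← sub_self γ,
    max_sub_sub_right, sub_add_eq_add_sub, max_add_min, add_sub_cancel_right]

theorem max_sub_zero_mul_min_div_one (hγ : 0 < γ) (σ : R) :
    max (σ - γ) 0 * min (σ / γ) 1 = max (σ - γ) 0 := by
  rcases le_total σ γ with h | h
  · rw [max_eq_right (sub_nonpos.2 h), zero_mul]
  · rw [min_eq_right ((one_le_div hγ).2 h), mul_one]

end SoftThreshold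

/-- singular value soft-thresholding is the proximal operator of γ‖·‖_*:
if Z = Σ σᵢ·uᵢ·vᵢᵀ is an SVD, then Σ max(σᵢ − γ, 0)·uᵢ·vᵢᵀ minimizes
X ↦ γ‖X‖_* + ½‖X − Z‖_F². -/
theorem prox_nuclear_norm {n1 n2 k : ℕ} (γ : ℝ) (hγ : 0 < γ)
    (σ : Fin k → ℝ) (hσ : ∀ i, 0 ≤ σ i)
    (u : Fin k → Fin n1 → ℝ) (v : Fin k → Fin n2 → ℝ)
    (hu : ∀ i j : Fin k, (∑ l, u i l * u j l) = if i = j then 1 else 0)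
    (hv : ∀ i j : Fin k, (∑ l, v i l * v j l) = if i = j then 1 else 0)
    (Z Xstar : Matrix (Fin n1) (Fin n2) ℝ)
    (hZ : Z = Matrix.of fun p q => ∑ i, σ i * (u i p * v i q))
    (hXstar : Xstar = Matrix.of fun p q => ∑ i, max (σ i - γ) 0 * (u i p * v i q)) :
    ∀ X : Matrix (Fin n1) (Fin n2) ℝ,
      γ * nuc Xstar + (1 / 2) * frob (Xstar - Z) ^ 2 ≤
        γ * nuc X + (1 / 2) * frob (X - Z) ^ 2 := by
  intro X
  have hU := of_mul_transpose_of_eq_one hu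
  have hV := of_mul_transpose_of_eq_one hv
  set s : Fin k → ℝ := fun i => max (σ i - γ) 0
  set b : Fin k → ℝ := fun i => min (σ i / γ) 1
  have s_nonneg (i : Fin k) : 0 ≤ s i := le_max_right _ _
  have abs_b_le (i : Fin k) : |b i| ≤ 1 :=
    (abs_of_nonneg (le_min (div_nonneg (hσ i) hγ.le) zero_le_one)).trans_le (min_le_right _ _)
  have s_mul_b (i : Fin k) : s i * b i = s i := max_sub_zero_mul_min_div_one hγ (σ i)
  have s_add_b : s + γ • b = σ := funext fun i => max_sub_zero_add_mul_min_div_one hγ (σ i)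
  have growth := prox_nuc_growth_transpose_mul_diagonal_mul hγ.le hU hV s_nonneg abs_b_le s_mul_b X
  rw [s_add_b, ← of_sum_mul_mul_eq, ← of_sum_mul_mul_eq, ← hZ, ← hXstar] at growth
  linarith [sq_nonneg (frob (X - Xstar))]
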